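/- Let u be a subharmonic function on an open set Ω ⊂ ℝ^m whose distributional Laplacian Δu has finite total mass ‖Δu‖_Ω < ∞. For δ > 0 let û_δ(x) := (1/(τ_m δ^m)) ∫_{|ζ−x| ≤ δ} u(ζ) dV(ζ) be the ball average over B(x,δ). Then for δ small enough, ∫_{Ω_δ} (û_δ(x) − u(x)) dV(x) ≤ C_m · ‖Δu‖_Ω · δ², where Ω_δ = {x ∈ Ω : dist(x,∂Ω) > δ}, τ_m is the volume of the unit ball, and C_m depends only on m. -/

import Mathlib

open Set MeasureTheory Metric

/-- The Laplacian of a (twice differentiable) test function on `ℝ^m`. -/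
noncomputable def testLaplacian {m : ℕ} (φ : EuclideanSpace ℝ (Fin m) → ℝ)
    (x : EuclideanSpace ℝ (Fin m)) : ℝ :=
  ∑ i : Fin m,
    fderiv ℝ (fun y => fderiv ℝ φ y (EuclideanSpace.single i 1)) x
      (EuclideanSpace.single i 1)

/-!
The proof is by duality. Averaging `d/dr f (r z) = ∇f (r z) · z` over `z` in the unit ball,
integrating by parts with the weight `(1 - ‖z‖²) / 2` and integrating over `0 < r ≤ δ` gives a
positive measure `σ`, carried by the ball `B(0, δ)` and of mass at most `δ² / 2`, such that
`∫ Δf dσ = ⨍_{B(0, δ)} f - f(0)` for every test function `f`. Thus the potential `χ ∗ σ` of a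
test function `χ` has Laplacian `χ̂_δ - χ`, where `χ̂_δ` is the ball average. Ball averaging being
symmetric, `∫ χ (û_δ - u) dV = ∫ (χ ∗ σ) dΔu`, and the right-hand side is at most
`δ² / 2 · ‖Δu‖_Ω` when `0 ≤ χ ≤ 1`. By submeanness the left-hand side dominates the integral of
`û_δ - u` over the set where `χ = 1`, so cutoffs `χ` equal to `1` on compact subsets of `Ω_δ`
yield the estimate on each of them and, by exhaustion, on `Ω_δ`.
-/

section Laplacian

open InnerProductSpace
open scoped Laplacian

lemma contDiff_fderiv_apply {E F : Type*} [NormedAddCommGroup E] [NormedSpace ℝ E]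
    [NormedAddCommGroup F] [NormedSpace ℝ F] {f : E → F} (hf : ContDiff ℝ 2 f) (v : E) :
    ContDiff ℝ 1 fun x => fderiv ℝ f x v :=
  (hf.fderiv_right (by norm_num)).clm_apply contDiff_const

variable {E F : Type*} [NormedAddCommGroup E] [InnerProductSpace ℝ E] [FiniteDimensional ℝ E]
  [NormedAddCommGroup F] [NormedSpace ℝ F] {f : E → F}

lemma laplacian_eq_sum_fderiv_fderiv {ι : Type*} [Fintype ι] (b : OrthonormalBasis ι ℝ E)
    (hf : ContDiff ℝ 2 f) (x : E) :
    Δ f x = ∑ i, fderiv ℝ (fun y => fderiv ℝ f y (b i)) x (b i) := by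
  have hdf : DifferentiableAt ℝ (fderiv ℝ f) x :=
    (hf.fderiv_right (m := 1) (by norm_num)).differentiable one_ne_zero x
  simp only [laplacian_eq_iteratedFDeriv_orthonormalBasis f b, iteratedFDeriv_two_apply,
    Matrix.cons_val_zero, Matrix.cons_val_one]
  refine Finset.sum_congr rfl fun i _ => ?_
  rw [fderiv_clm_apply hdf (differentiableAt_const _)]
  simp

lemma testLaplacian_eq_laplacian {m : ℕ} {φ : EuclideanSpace ℝ (Fin m) → ℝ}
    (hφ : ContDiff ℝ 2 φ) : testLaplacian φ = Δ φ := by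
  ext x
  simp [testLaplacian, laplacian_eq_sum_fderiv_fderiv (EuclideanSpace.basisFun (Fin m) ℝ) hφ]

lemma continuous_laplacian (hf : ContDiff ℝ 2 f) : Continuous (Δ f) := by
  rw [funext (laplacian_eq_sum_fderiv_fderiv (stdOrthonormalBasis ℝ E) hf)]
  exact continuous_finsetSum _ fun i _ =>
    ((contDiff_fderiv_apply hf _).continuous_fderiv one_ne_zero).clm_apply continuous_const

lemma support_laplacian_subset (f : E → F) : Function.support (Δ f) ⊆ tsupport f := by
  refine Function.support_subset_iff'.2 fun x hx => ?_
  have hzero : iteratedFDeriv ℝ 2 f x = 0 :=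
    Function.notMem_support.1 fun h => hx (support_iteratedFDeriv_subset 2 h)
  simp [laplacian_eq_iteratedFDeriv_stdOrthonormalBasis, hzero]

lemma laplacian_comp_const_add_smul (hf : ContDiff ℝ 2 f) (a : E) (c : ℝ) (x : E) :
    Δ (fun y => f (a + c • y)) x = c ^ 2 • Δ f (a + c • x) := by
  have hfa : ContDiff ℝ 2 fun y => f (a + y) := hf.comp (contDiff_const.add contDiff_id)
  simp only [laplacian_eq_iteratedFDeriv_stdOrthonormalBasis, Finset.smul_sum]
  refine Finset.sum_congr rfl fun i _ => ?_
  simp only [iteratedFDeriv_comp_const_smul c hfa, iteratedFDeriv_comp_add_left,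
    smul_apply]

end Laplacian

section Superposition

open scoped Laplacian

lemma integrable_comp_const_sub {E F : Type*} [NormedAddCommGroup E] [MeasurableSpace E]
    [OpensMeasurableSpace E] [NormedAddCommGroup F] [SecondCountableTopologyEither E F] {f : E → F}
    (σ : Measure E) [IsFiniteMeasure σ] (hf : Continuous f) (hs : HasCompactSupport f) (x : E) :
    Integrable (fun y => f (x - y)) σ := by
  obtain ⟨C, hC⟩ := hs.exists_bound_of_continuous hf
  exact .of_bound (hf.comp (continuous_const.sub continuous_id)).aestronglyMeasurable C
    (.of_forall fun y => hC _)

variable {E F : Type*} [NormedAddCommGroup E] [MeasurableSpace E]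
  [NormedAddCommGroup F] [NormedSpace ℝ F] {f : E → F} (σ : Measure E) [IsFiniteMeasure σ]

lemma contDiff_integral_comp_const_sub [NormedSpace ℝ E] [BorelSpace E] [CompleteSpace F] {n : ℕ∞}
    (hf : ContDiff ℝ n f) (hs : HasCompactSupport f) :
    ContDiff ℝ n fun x => ∫ y, f (x - y) ∂σ := by
  have heq : (fun x => ∫ y, f (x - y) ∂σ) =
      convolution (fun _ => (1 : ℝ)) f (ContinuousLinearMap.lsmul ℝ ℝ) σ := by
    ext x
    simp only [convolution_def, ContinuousLinearMap.lsmul_apply, one_smul]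
  rw [heq]
  exact hs.contDiff_convolution_right _ (continuous_const.locallyIntegrable) hf

lemma fderiv_integral_comp_const_sub_apply [NormedSpace ℝ E] [FiniteDimensional ℝ E]
    [BorelSpace E] [CompleteSpace F] (hf : ContDiff ℝ 1 f) (hs : HasCompactSupport f) (x v : E) :
    fderiv ℝ (fun x => ∫ y, f (x - y) ∂σ) x v = ∫ y, fderiv ℝ f (x - y) v ∂σ := by
  have hdf : Continuous (fderiv ℝ f) := hf.continuous_fderiv one_ne_zero
  have hsdf : HasCompactSupport (fderiv ℝ f) := hs.fderiv ℝ
  have hintegrable := integrable_comp_const_sub σ hdf hsdf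
  obtain ⟨C, hC⟩ := hsdf.exists_bound_of_continuous hdf
  have hderiv : HasFDerivAt (fun x => ∫ y, f (x - y) ∂σ) (∫ y, fderiv ℝ f (x - y) ∂σ) x :=
    hasFDerivAt_integral_of_dominated_of_fderiv_le (s := univ) (bound := fun _ => C)
      (F := fun x y => f (x - y)) (F' := fun x y => fderiv ℝ f (x - y))
      Filter.univ_mem
      (.of_forall fun x => (integrable_comp_const_sub σ hf.continuous hs x).aestronglyMeasurable)
      (integrable_comp_const_sub σ hf.continuous hs x) (hintegrable x).aestronglyMeasurable
      (.of_forall fun y x _ => hC _) (integrable_const C)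
      (.of_forall fun y x _ => (hasFDerivAt_comp_sub y).2
        (hf.differentiable one_ne_zero _).hasFDerivAt)
  rw [hderiv.fderiv, ContinuousLinearMap.integral_apply (hintegrable x)]

lemma laplacian_integral_comp_const_sub [InnerProductSpace ℝ E] [FiniteDimensional ℝ E]
    [BorelSpace E] [CompleteSpace F] (hf : ContDiff ℝ 2 f) (hs : HasCompactSupport f) (x : E) :
    Δ (fun x => ∫ y, f (x - y) ∂σ) x = ∫ y, Δ f (x - y) ∂σ := by
  let b := stdOrthonormalBasis ℝ E
  have hd (i) : ContDiff ℝ 1 fun y => fderiv ℝ f y (b i) := contDiff_fderiv_apply hf _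
  have hsd (i) : HasCompactSupport fun y => fderiv ℝ f y (b i) := hs.fderiv_apply ℝ _
  rw [laplacian_eq_sum_fderiv_fderiv b (contDiff_integral_comp_const_sub σ hf hs)]
  simp only [laplacian_eq_sum_fderiv_fderiv b hf,
    fderiv_integral_comp_const_sub_apply σ (hf.of_le one_le_two) hs,
    fderiv_integral_comp_const_sub_apply σ (hd _) (hsd _)]
  exact (integral_finsetSum _ fun i _ => integrable_comp_const_sub σ
    (((hd i).continuous_fderiv one_ne_zero).clm_apply continuous_const)
    ((hsd i).fderiv_apply ℝ _) x).symm

end Superposition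

section ParaboloidCap

open scoped Laplacian NNReal

/-- The function equal to `(1 - ‖y‖²) / 2` on the unit ball and to `0` outside. It is the
compactly supported Lipschitz weight, with gradient `-y` on the unit ball, against which one
integrates by parts. -/
noncomputable def paraboloidCap {E : Type*} [Norm E] (y : E) : ℝ := (1 - min ‖y‖ 1 ^ 2) / 2

lemma paraboloidCap_of_one_le_norm {E : Type*} [Norm E] {y : E} (hy : 1 ≤ ‖y‖) :
    paraboloidCap y = 0 := by
  simp [paraboloidCap, min_eq_right hy]

lemma paraboloidCap_mem_Icc {E : Type*} [SeminormedAddCommGroup E] (y : E) :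
    paraboloidCap y ∈ Icc (0 : ℝ) (1 / 2) := by
  have h0 : 0 ≤ min ‖y‖ 1 := le_min (norm_nonneg _) zero_le_one
  have h1 : min ‖y‖ 1 ≤ 1 := min_le_right _ _
  constructor <;> unfold paraboloidCap <;> nlinarith

lemma lipschitzWith_paraboloidCap {E : Type*} [SeminormedAddCommGroup E] :
    LipschitzWith 1 (paraboloidCap : E → ℝ) := by
  refine LipschitzWith.of_le_add fun x y => ?_
  have hmin : min ‖y‖ 1 ≤ min ‖x‖ 1 + dist x y := by
    simpa [dist_comm x y] using
      (lipschitzWith_one_norm.min_const 1).le_add_mul y x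
  have hx0 : 0 ≤ min ‖x‖ 1 := le_min (norm_nonneg _) zero_le_one
  have hx1 : min ‖x‖ 1 ≤ 1 := min_le_right _ _
  have hy0 : 0 ≤ min ‖y‖ 1 := le_min (norm_nonneg _) zero_le_one
  have hy1 : min ‖y‖ 1 ≤ 1 := min_le_right _ _
  unfold paraboloidCap
  nlinarith [dist_nonneg (x := x) (y := y)]

@[fun_prop]
lemma continuous_paraboloidCap {E : Type*} [SeminormedAddCommGroup E] :
    Continuous (paraboloidCap : E → ℝ) :=
  lipschitzWith_paraboloidCap.continuous

lemma hasCompactSupport_paraboloidCap {E : Type*} [SeminormedAddCommGroup E] [ProperSpace E] :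
    HasCompactSupport (paraboloidCap : E → ℝ) :=
  .intro (isCompact_closedBall 0 1) fun _ hx =>
    paraboloidCap_of_one_le_norm ((not_le.1 (mt mem_closedBall_zero_iff.2 hx)).le)

lemma lineDeriv_paraboloidCap_of_one_lt_norm {E : Type*} [NormedAddCommGroup E] [NormedSpace ℝ E]
    {y : E} (hy : 1 < ‖y‖) (v : E) : lineDeriv ℝ paraboloidCap y v = 0 := by
  have hev : paraboloidCap =ᶠ[nhds y] fun _ => (0 : ℝ) := by
    filter_upwards [continuous_norm.continuousAt.eventually (lt_mem_nhds hy)] with z hz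
    exact paraboloidCap_of_one_le_norm hz.le
  rw [hev.lineDeriv_eq, lineDeriv, deriv_const]

variable {E : Type*} [NormedAddCommGroup E] [InnerProductSpace ℝ E]

lemma lineDeriv_paraboloidCap_of_norm_lt_one {y : E} (hy : ‖y‖ < 1) (v : E) :
    lineDeriv ℝ paraboloidCap y v = -inner ℝ y v := by
  have hev : paraboloidCap =ᶠ[nhds y] fun z => 2⁻¹ * (1 - ‖z‖ ^ 2) := by
    filter_upwards [continuous_norm.continuousAt.eventually (gt_mem_nhds hy)] with z hz
    rw [paraboloidCap, min_eq_left hz.le, div_eq_inv_mul]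
  have hderiv := ((hasStrictFDerivAt_norm_sq y).hasFDerivAt.const_sub 1).const_mul (2⁻¹ : ℝ)
  rw [hev.lineDeriv_eq, (hderiv.hasLineDerivAt v).lineDeriv]
  simp

variable [FiniteDimensional ℝ E] [MeasurableSpace E] [BorelSpace E] (ν : Measure E)
  [ν.IsAddHaarMeasure]

lemma setIntegral_closedBall_inner_mul {g : E → ℝ} {C : ℝ≥0} (hg : LipschitzWith C g) (v : E) :
    ∫ z in closedBall 0 1, inner ℝ z v * g z ∂ν =
      ∫ z in closedBall 0 1, paraboloidCap z * lineDeriv ℝ g z v ∂ν := by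
  have hsphere : ∀ᵐ z ∂ν, z ∉ sphere (0 : E) 1 :=
    measure_eq_zero_iff_ae_notMem.1 (Measure.addHaar_sphere_of_ne_zero ν 0 one_ne_zero)
  calc ∫ z in closedBall 0 1, inner ℝ z v * g z ∂ν
      = ∫ z, lineDeriv ℝ paraboloidCap z (-v) * g z ∂ν := by
        rw [← integral_indicator measurableSet_closedBall]
        refine integral_congr_ae (hsphere.mono fun z hz => ?_)
        simp only [indicator, mem_closedBall_zero_iff]
        split_ifs with hz1
        · rw [lineDeriv_paraboloidCap_of_norm_lt_one (hz1.lt_of_ne (by simpa using hz)),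
            inner_neg_right, neg_neg]
        · rw [lineDeriv_paraboloidCap_of_one_lt_norm (not_le.1 hz1), zero_mul]
    _ = ∫ z, lineDeriv ℝ g z v * paraboloidCap z ∂ν :=
        (hg.integral_lineDeriv_mul_eq lipschitzWith_paraboloidCap
          hasCompactSupport_paraboloidCap v).symm
    _ = ∫ z in closedBall 0 1, paraboloidCap z * lineDeriv ℝ g z v ∂ν := by
        simp only [mul_comm (lineDeriv ℝ g _ v)]
        refine (setIntegral_eq_integral_of_forall_compl_eq_zero fun z hz => ?_).symm
        rw [paraboloidCap_of_one_le_norm (not_le.1 (mt mem_closedBall_zero_iff.2 hz)).le, zero_mul]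

lemma setIntegral_closedBall_fderiv_apply_self {g : E → ℝ} (hg : ContDiff ℝ 2 g)
    (hs : HasCompactSupport g) :
    ∫ z in closedBall 0 1, fderiv ℝ g z z ∂ν =
      ∫ z in closedBall 0 1, paraboloidCap z * Δ g z ∂ν := by
  let b := stdOrthonormalBasis ℝ E
  have hd (i) : ContDiff ℝ 1 fun y => fderiv ℝ g y (b i) := contDiff_fderiv_apply hg _
  have hdc (i) : Continuous fun y => fderiv ℝ g y (b i) := (hd i).continuous
  have : ∀ i, Continuous fun y => fderiv ℝ (fun y => fderiv ℝ g y (b i)) y (b i) := fun i =>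
    ((hd i).continuous_fderiv one_ne_zero).clm_apply continuous_const
  have hint {h : E → ℝ} (hh : Continuous h) : IntegrableOn h (closedBall 0 1) ν :=
    hh.continuousOn.integrableOn_compact (isCompact_closedBall 0 1)
  have hexpand (z : E) : fderiv ℝ g z z = ∑ i, inner ℝ z (b i) * fderiv ℝ g z (b i) := by
    have hz : fderiv ℝ g z z = fderiv ℝ g z (∑ i, inner ℝ (b i) z • b i) := by rw [b.sum_repr']
    simpa [real_inner_comm] using hz
  have hparts (i) : ∫ z in closedBall 0 1, inner ℝ z (b i) * fderiv ℝ g z (b i) ∂ν =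
      ∫ z in closedBall 0 1,
        paraboloidCap z * fderiv ℝ (fun y => fderiv ℝ g y (b i)) z (b i) ∂ν := by
    obtain ⟨C, hC⟩ :=
      (hd i).lipschitzWith_of_hasCompactSupport (hs.fderiv_apply ℝ (b i)) one_ne_zero
    rw [setIntegral_closedBall_inner_mul ν hC]
    simp only [((hd i).differentiable one_ne_zero _).lineDeriv_eq_fderiv]
  simp only [hexpand, laplacian_eq_sum_fderiv_fderiv b hg, Finset.mul_sum]
  rw [integral_finsetSum _ fun i _ => hint (by fun_prop),
    integral_finsetSum _ fun i _ => hint (by fun_prop)]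
  exact Finset.sum_congr rfl fun i _ => hparts i

lemma setIntegral_closedBall_fderiv_smul_apply_self {f : E → ℝ} (hf : ContDiff ℝ 2 f)
    (hs : HasCompactSupport f) {r : ℝ} (hr : r ≠ 0) :
    ∫ z in closedBall 0 1, fderiv ℝ f (r • z) z ∂ν =
      ∫ z in closedBall 0 1, r * paraboloidCap z * Δ f (r • z) ∂ν := by
  have hΔ (z : E) : Δ (fun y => f (r • y)) z = r ^ 2 * Δ f (r • z) := by
    simpa using laplacian_comp_const_add_smul hf 0 r z
  refine mul_left_cancel₀ hr ?_
  calc r * ∫ z in closedBall 0 1, fderiv ℝ f (r • z) z ∂ν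
      = ∫ z in closedBall 0 1, fderiv ℝ (fun y => f (r • y)) z z ∂ν := by
        simp only [fderiv_comp_smul, smul_apply, smul_eq_mul, integral_const_mul]
    _ = ∫ z in closedBall 0 1, paraboloidCap z * Δ (fun y => f (r • y)) z ∂ν :=
        setIntegral_closedBall_fderiv_apply_self ν (hf.comp (contDiff_const_smul r))
          (hs.comp_smul hr)
    _ = r * ∫ z in closedBall 0 1, r * paraboloidCap z * Δ f (r • z) ∂ν := by
        simp only [hΔ, ← integral_const_mul]
        exact integral_congr_ae (.of_forall fun z => by ring)

end ParaboloidCap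

section SetAverage

open scoped Pointwise

variable {E F : Type*} [NormedAddCommGroup E] [NormedSpace ℝ E] [FiniteDimensional ℝ E]
  [MeasurableSpace E] [BorelSpace E] [NormedAddCommGroup F] [NormedSpace ℝ F] (ν : Measure E)
  [ν.IsAddHaarMeasure]

lemma setAverage_closedBall_comp_smul (f : E → F) {δ : ℝ} (hδ : 0 < δ) :
    ⨍ z in closedBall 0 1, f (δ • z) ∂ν = ⨍ y in closedBall 0 δ, f y ∂ν := by
  have hball : δ • closedBall (0 : E) 1 = closedBall 0 δ := by
    rw [_root_.smul_closedBall _ _ zero_le_one, smul_zero, Real.norm_of_nonneg hδ.le, mul_one]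
  have hvol : ν.real (closedBall 0 δ) = δ ^ Module.finrank ℝ E * ν.real (closedBall 0 1) := by
    rw [Measure.real, Measure.real, Measure.addHaar_closedBall' ν _ hδ.le, ENNReal.toReal_mul,
      ENNReal.toReal_ofReal (by positivity)]
  rw [setAverage_eq, setAverage_eq, Measure.setIntegral_comp_smul_of_pos ν f _ hδ, hball, hvol,
    smul_smul, mul_inv_rev]

lemma setAverage_closedBall_comp_const_sub (f : E → F) (x : E) (δ : ℝ) :
    ⨍ y in closedBall 0 δ, f (x - y) ∂ν = ⨍ y in closedBall x δ, f y ∂ν := by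
  have hball : (fun y => x - y) ⁻¹' closedBall x δ = closedBall 0 δ := by
    ext y
    simp [dist_eq_norm]
  have hint := (Measure.measurePreserving_sub_left ν x).setIntegral_preimage_emb
    (MeasurableEquiv.subLeft x).measurableEmbedding f (closedBall x δ)
  rw [setAverage_eq, setAverage_eq, ← hint, hball, Measure.real, Measure.real,
    Measure.addHaar_closedBall_center ν x]

end SetAverage

section BallGreenMeasure

open ProbabilityTheory

lemma integrable_of_ae_mem_isCompact {X F : Type*} [TopologicalSpace X] [T2Space X]
    [MeasurableSpace X] [OpensMeasurableSpace X] [NormedAddCommGroup F]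
    [SecondCountableTopologyEither X F] {μ : Measure X} [IsFiniteMeasureOnCompacts μ] {K : Set X}
    {f : X → F} (hf : Continuous f) (hK : IsCompact K) (hμ : ∀ᵐ x ∂μ, x ∈ K) :
    Integrable f μ := by
  rw [← Measure.restrict_eq_self_of_ae_mem hμ]
  exact hf.continuousOn.integrableOn_compact hK

lemma intervalIntegral_fderiv_smul_apply_self {E F : Type*} [NormedAddCommGroup E]
    [NormedSpace ℝ E] [NormedAddCommGroup F] [NormedSpace ℝ F] [CompleteSpace F] {f : E → F}
    (hf : ContDiff ℝ 1 f) (a b : ℝ) (z : E) :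
    ∫ r in a..b, fderiv ℝ f (r • z) z = f (b • z) - f (a • z) := by
  have : Continuous (fderiv ℝ f) := hf.continuous_fderiv one_ne_zero
  refine intervalIntegral.integral_eq_sub_of_hasDerivAt (f := fun r : ℝ => f (r • z))
    (fun r _ => ?_) (Continuous.intervalIntegrable (by fun_prop) a b)
  exact (hf.differentiable one_ne_zero (r • z)).hasFDerivAt.comp_hasDerivAt r
    (by simpa using (hasDerivAt_id r).smul_const z)

variable {E : Type*} [NormedAddCommGroup E] [MeasurableSpace E] [BorelSpace E] (ν : Measure E)

lemma ae_prod_cond_closedBall_mem (δ : ℝ) :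
    ∀ᵐ p ∂(volume.restrict (Ioc 0 δ)).prod ν[|closedBall (0 : E) 1],
      p ∈ Ioc 0 δ ×ˢ closedBall 0 1 := by
  rw [Measure.ae_prod_mem_iff_ae_ae_mem (measurableSet_Ioc.prod measurableSet_closedBall)]
  filter_upwards [ae_restrict_mem measurableSet_Ioc] with r hr
  filter_upwards [ae_cond_mem measurableSet_closedBall] with z hz
  exact ⟨hr, hz⟩

lemma integrable_prod_cond_closedBall [ProperSpace E] {F : Type*} [NormedAddCommGroup F]
    {g : ℝ × E → F} (hg : Continuous g) (δ : ℝ) :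
    Integrable g ((volume.restrict (Ioc 0 δ)).prod ν[|closedBall 0 1]) :=
  integrable_of_ae_mem_isCompact hg ((isCompact_Icc (a := 0) (b := δ)).prod
    (isCompact_closedBall 0 1)) ((ae_prod_cond_closedBall_mem ν δ).mono fun _ hp =>
      ⟨Ioc_subset_Icc_self hp.1, hp.2⟩)

variable [NormedSpace ℝ E]

/-- The positive measure representing the defect in the mean value property over the ball of
radius `δ`: the integral of `Δ f` against it is the average of `f` over that ball minus `f 0`.
It is encoded as the image under `(r, z) ↦ r • z` of the measure with density
`r * paraboloidCap z`, where `r` ranges over `(0, δ]` and `z` is uniform in the unit ball. -/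
noncomputable def ballGreenMeasure (δ : ℝ) : Measure E :=
  (((volume.restrict (Ioc 0 δ)).prod ν[|closedBall 0 1]).withDensity fun p : ℝ × E =>
    ENNReal.ofReal (p.1 * paraboloidCap p.2)).map fun p => p.1 • p.2

variable [FiniteDimensional ℝ E]

lemma ae_ballGreenMeasure_mem_closedBall (δ : ℝ) :
    ∀ᵐ y ∂ballGreenMeasure ν δ, y ∈ closedBall 0 δ := by
  refine (ae_map_iff (by fun_prop) measurableSet_closedBall).2 ?_
  refine (withDensity_absolutelyContinuous _ _).ae_le ?_
  filter_upwards [ae_prod_cond_closedBall_mem ν δ] with p ⟨hr, hz⟩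
  rw [mem_closedBall_zero_iff] at hz
  rw [dist_zero_right, norm_smul, Real.norm_of_nonneg hr.1.le]
  exact (mul_le_of_le_one_right hr.1.le hz).trans hr.2

lemma ballGreenMeasure_univ_le {δ : ℝ} (hδ : 0 ≤ δ) :
    ballGreenMeasure ν δ univ ≤ ENNReal.ofReal (1 / 2 * δ ^ 2) := by
  rw [ballGreenMeasure, Measure.map_apply (by fun_prop) .univ, preimage_univ,
    withDensity_apply _ .univ, setLIntegral_univ]
  calc ∫⁻ p, ENNReal.ofReal (p.1 * paraboloidCap p.2)
        ∂(volume.restrict (Ioc 0 δ)).prod ν[|closedBall (0 : E) 1]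
      ≤ ∫⁻ _, ENNReal.ofReal (δ * (1 / 2))
          ∂(volume.restrict (Ioc 0 δ)).prod ν[|closedBall (0 : E) 1] := by
        refine lintegral_mono_ae ((ae_prod_cond_closedBall_mem ν δ).mono fun p hp => ?_)
        exact ENNReal.ofReal_le_ofReal (mul_le_mul hp.1.2 (paraboloidCap_mem_Icc _).2
          (paraboloidCap_mem_Icc _).1 hδ)
    _ = ENNReal.ofReal (δ * (1 / 2)) * (ENNReal.ofReal δ * ν[univ | closedBall 0 1]) := by
        rw [lintegral_const, ← univ_prod_univ, Measure.prod_prod, Measure.restrict_apply_univ,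
          Real.volume_Ioc, sub_zero]
    _ ≤ ENNReal.ofReal (δ * (1 / 2)) * (ENNReal.ofReal δ * 1) := by
        gcongr
        exact prob_le_one
    _ = ENNReal.ofReal (1 / 2 * δ ^ 2) := by
        rw [mul_one, ← ENNReal.ofReal_mul (by positivity)]
        ring_nf

instance isFiniteMeasure_ballGreenMeasure (δ : ℝ) : IsFiniteMeasure (ballGreenMeasure ν δ) := by
  rcases le_total 0 δ with hδ | hδ
  · exact ⟨(ballGreenMeasure_univ_le ν hδ).trans_lt ENNReal.ofReal_lt_top⟩
  · simp only [ballGreenMeasure, Ioc_eq_empty (not_lt.2 hδ), Measure.restrict_empty,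
      Measure.zero_prod, withDensity_zero_left, Measure.map_zero]
    infer_instance

lemma integral_ballGreenMeasure {f : E → ℝ} (hf : Continuous f) (δ : ℝ) :
    ∫ y, f y ∂ballGreenMeasure ν δ =
      ∫ r in Ioc 0 δ, ∫ z, r * paraboloidCap z * f (r • z) ∂ν[|closedBall 0 1] := by
  have hdensity : ∀ᵐ p ∂(volume.restrict (Ioc 0 δ)).prod ν[|closedBall (0 : E) 1],
      (ENNReal.ofReal (p.1 * paraboloidCap p.2)).toReal • f (p.1 • p.2) =
        p.1 * paraboloidCap p.2 * f (p.1 • p.2) := by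
    filter_upwards [ae_prod_cond_closedBall_mem ν δ] with p hp
    rw [ENNReal.toReal_ofReal (mul_nonneg hp.1.1.le (paraboloidCap_mem_Icc _).1), smul_eq_mul]
  rw [ballGreenMeasure, integral_map (by fun_prop) hf.aestronglyMeasurable,
    integral_withDensity_eq_integral_toReal_smul (Measurable.ennreal_ofReal (by fun_prop))
      (.of_forall fun _ => ENNReal.ofReal_lt_top), integral_congr_ae hdensity]
  exact integral_prod _ (integrable_prod_cond_closedBall ν (by fun_prop) δ)

end BallGreenMeasure

section MeanValueDefect

open ProbabilityTheory
open scoped Laplacian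

variable {E : Type*} [NormedAddCommGroup E] [InnerProductSpace ℝ E] [FiniteDimensional ℝ E]
  [MeasurableSpace E] [BorelSpace E] (ν : Measure E) [ν.IsAddHaarMeasure]

lemma integral_laplacian_ballGreenMeasure {f : E → ℝ} (hf : ContDiff ℝ 2 f)
    (hs : HasCompactSupport f) {δ : ℝ} (hδ : 0 < δ) :
    ∫ y, Δ f y ∂ballGreenMeasure ν δ = (⨍ y in closedBall 0 δ, f y ∂ν) - f 0 := by
  have hf1 : ContDiff ℝ 1 f := hf.of_le one_le_two
  have : Continuous (fderiv ℝ f) := hf1.continuous_fderiv one_ne_zero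
  have : IsProbabilityMeasure ν[|closedBall (0 : E) 1] :=
    cond_isProbabilityMeasure_of_finite (measure_closedBall_pos ν _ one_pos).ne'
      measure_closedBall_lt_top.ne
  have hprod : Integrable (fun p : ℝ × E => fderiv ℝ f (p.1 • p.2) p.2)
      ((volume.restrict (Ioc 0 δ)).prod ν[|closedBall 0 1]) :=
    integrable_prod_cond_closedBall ν (by fun_prop) δ
  have hint : Integrable (fun z => f (δ • z)) ν[|closedBall 0 1] :=
    integrable_of_ae_mem_isCompact (hf.continuous.comp (continuous_const_smul δ))
      (isCompact_closedBall 0 1) (ae_cond_mem measurableSet_closedBall)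
  calc ∫ y, Δ f y ∂ballGreenMeasure ν δ
      = ∫ r in Ioc 0 δ, ∫ z, r * paraboloidCap z * Δ f (r • z) ∂ν[|closedBall 0 1] :=
        integral_ballGreenMeasure ν (continuous_laplacian hf) δ
    _ = ∫ r in Ioc 0 δ, ∫ z, fderiv ℝ f (r • z) z ∂ν[|closedBall 0 1] := by
        refine setIntegral_congr_fun measurableSet_Ioc fun r hr => ?_
        simp only [ProbabilityTheory.cond, integral_smul_measure,
          setIntegral_closedBall_fderiv_smul_apply_self ν hf hs hr.1.ne']
    _ = ∫ z, (∫ r in Ioc 0 δ, fderiv ℝ f (r • z) z) ∂ν[|closedBall 0 1] :=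
        integral_integral_swap hprod
    _ = ∫ z, (f (δ • z) - f 0) ∂ν[|closedBall 0 1] := by
        simp only [← intervalIntegral.integral_of_le hδ.le,
          intervalIntegral_fderiv_smul_apply_self hf1, zero_smul]
    _ = (⨍ y in closedBall 0 δ, f y ∂ν) - f 0 := by
        rw [integral_sub hint (integrable_const _), integral_const, probReal_univ, one_smul,
          ← setAverage_closedBall_comp_smul ν f hδ, setAverage_eq', ProbabilityTheory.cond]

end MeanValueDefect

section BallAverage

variable {E : Type*} [NormedAddCommGroup E] [MeasurableSpace E]

/-- The average of `u` over the closed ball of radius `δ` centred at `x`, written `û_δ(x)` for the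
Lebesgue measure `ν`. -/
noncomputable def ballAverage (ν : Measure E) (δ : ℝ) (u : E → ℝ) (x : E) : ℝ :=
  ⨍ y in closedBall x δ, u y ∂ν

variable [BorelSpace E] (ν : Measure E)

lemma mul_ballAverage_indicator_cthickening_sub {χ u : E → ℝ} {δ : ℝ} (hδ : 0 ≤ δ) (x : E) :
    χ x * (ballAverage ν δ ((cthickening δ (tsupport χ)).indicator u) x -
        (cthickening δ (tsupport χ)).indicator u x) =
      χ x * (ballAverage ν δ u x - u x) := by
  by_cases hx : x ∈ tsupport χ
  · have hball : closedBall x δ ⊆ cthickening δ (tsupport χ) :=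
      closedBall_subset_cthickening hx δ
    rw [indicator_of_mem (hball (mem_closedBall_self hδ)), ballAverage, ballAverage,
      setAverage_congr_fun measurableSet_closedBall
        (.of_forall fun y hy => indicator_of_mem (hball hy) u)]
  · rw [image_eq_zero_of_notMem_tsupport hx, zero_mul, zero_mul]

lemma ballAverage_eq_integral [ν.IsAddHaarMeasure] (δ : ℝ) (f : E → ℝ) (x : E) :
    ballAverage ν δ f x =
      (ν.real (closedBall 0 δ))⁻¹ * ∫ y, indicator {y | dist x y ≤ δ} f y ∂ν := by
  have hball : {y | dist x y ≤ δ} = closedBall x δ := by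
    ext y
    simp [dist_comm x y]
  rw [ballAverage, setAverage_eq, hball, integral_indicator measurableSet_closedBall,
    Measure.real, Measure.real, Measure.addHaar_closedBall_center ν x, smul_eq_mul]

variable [SecondCountableTopology E] {f g : E → ℝ}

lemma integrable_prod_indicator_dist_le (hf : Integrable f ν) (hg : Integrable g ν) (δ : ℝ) :
    Integrable (fun p : E × E => f p.1 * indicator {y | dist p.1 y ≤ δ} g p.2) (ν.prod ν) := by
  refine ((hf.mul_prod hg).indicator (s := {p | dist p.1 p.2 ≤ δ})
    (isClosed_le (by fun_prop) continuous_const).measurableSet).congr (.of_forall fun p => ?_)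
  simp [indicator]

variable [SFinite ν] [ν.IsAddHaarMeasure]

lemma integrable_mul_ballAverage (hf : Integrable f ν) (hg : Integrable g ν) (δ : ℝ) :
    Integrable (fun x => f x * ballAverage ν δ g x) ν := by
  have hint := (integrable_prod_indicator_dist_le ν hf hg δ).integral_prod_left
  simp only [integral_const_mul] at hint
  simpa only [ballAverage_eq_integral, mul_left_comm (f _)] using hint.const_mul _

lemma integral_mul_ballAverage_comm (hf : Integrable f ν) (hg : Integrable g ν) (δ : ℝ) :
    ∫ x, f x * ballAverage ν δ g x ∂ν = ∫ x, g x * ballAverage ν δ f x ∂ν := by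
  have hsymm (x y : E) : f x * indicator {y | dist x y ≤ δ} g y =
      g y * indicator {x | dist y x ≤ δ} f x := by
    simp [indicator, mul_comm, dist_comm]
  simp only [ballAverage_eq_integral, mul_left_comm _ (ν.real _)⁻¹, integral_const_mul _]
  congr 1
  calc ∫ x, f x * ∫ y, indicator {y | dist x y ≤ δ} g y ∂ν ∂ν
      = ∫ x, ∫ y, f x * indicator {y | dist x y ≤ δ} g y ∂ν ∂ν := by
        simp only [integral_const_mul]
    _ = ∫ y, ∫ x, g y * indicator {x | dist y x ≤ δ} f x ∂ν ∂ν := by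
        rw [integral_integral_swap (integrable_prod_indicator_dist_le ν hf hg δ)]
        simp only [hsymm]
    _ = ∫ y, g y * ∫ x, indicator {x | dist y x ≤ δ} f x ∂ν ∂ν := by
        simp only [integral_const_mul]

end BallAverage

section GreenPotential

open scoped Laplacian

variable {E : Type*} [NormedAddCommGroup E] [NormedSpace ℝ E] [FiniteDimensional ℝ E]
  [MeasurableSpace E] [BorelSpace E]

/-- The potential of the test function `f` at scale `δ`, that is, the convolution of `f` with
`ballGreenMeasure ν δ`. -/
noncomputable def greenPotential (ν : Measure E) (δ : ℝ) (f : E → ℝ) (x : E) : ℝ :=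
  ∫ y, f (x - y) ∂ballGreenMeasure ν δ

variable (ν : Measure E) {f : E → ℝ}

lemma contDiff_greenPotential (δ : ℝ) {n : ℕ∞} (hf : ContDiff ℝ n f) (hs : HasCompactSupport f) :
    ContDiff ℝ n (greenPotential ν δ f) :=
  contDiff_integral_comp_const_sub _ hf hs

lemma tsupport_greenPotential_subset (δ : ℝ) :
    tsupport (greenPotential ν δ f) ⊆ cthickening δ (tsupport f) := by
  refine closure_minimal (Function.support_subset_iff'.2 fun x hx => ?_) isClosed_cthickening
  refine integral_eq_zero_of_ae ?_
  filter_upwards [ae_ballGreenMeasure_mem_closedBall ν δ] with y hy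
  refine image_eq_zero_of_notMem_tsupport fun hxy => hx ?_
  exact mem_cthickening_of_dist_le x (x - y) δ _ hxy (by simpa using hy)

lemma norm_greenPotential_le {δ : ℝ} (hδ : 0 ≤ δ) {M : ℝ} (hf : ∀ x, ‖f x‖ ≤ M)
    (x : E) : ‖greenPotential ν δ f x‖ ≤ M * (1 / 2 * δ ^ 2) :=
  calc ‖greenPotential ν δ f x‖
      ≤ M * (ballGreenMeasure ν δ).real univ :=
        norm_integral_le_of_norm_le_const (.of_forall fun _ => hf _)
    _ ≤ M * (1 / 2 * δ ^ 2) := by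
        have hM : 0 ≤ M := (norm_nonneg _).trans (hf 0)
        gcongr
        exact ENNReal.toReal_le_of_le_ofReal (by positivity) (ballGreenMeasure_univ_le ν hδ)

lemma laplacian_greenPotential {E : Type*} [NormedAddCommGroup E] [InnerProductSpace ℝ E]
    [FiniteDimensional ℝ E] [MeasurableSpace E] [BorelSpace E] (ν : Measure E)
    [ν.IsAddHaarMeasure] {f : E → ℝ} (hf : ContDiff ℝ 2 f) (hs : HasCompactSupport f) {δ : ℝ}
    (hδ : 0 < δ) (x : E) : Δ (greenPotential ν δ f) x = ballAverage ν δ f x - f x := by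
  have hΔ (y : E) : Δ (fun z => f (x - z)) y = Δ f (x - y) := by
    simpa [← sub_eq_add_neg] using laplacian_comp_const_add_smul hf x (-1) y
  calc Δ (greenPotential ν δ f) x
      = ∫ y, Δ f (x - y) ∂ballGreenMeasure ν δ := laplacian_integral_comp_const_sub _ hf hs x
    _ = (⨍ y in closedBall 0 δ, f (x - y) ∂ν) - f (x - 0) := by
        simp only [← hΔ]
        exact integral_laplacian_ballGreenMeasure ν (hf.comp (contDiff_const.sub contDiff_id))
          (hs.comp_homeomorph (Homeomorph.subLeft x)) hδ
    _ = ballAverage ν δ f x - f x := by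
        rw [setAverage_closedBall_comp_const_sub, sub_zero, ballAverage]

end GreenPotential

section Duality

open scoped Laplacian

variable {E : Type*} [NormedAddCommGroup E] [InnerProductSpace ℝ E] [FiniteDimensional ℝ E]
  [MeasurableSpace E] [BorelSpace E]

/-- `μ` is the distributional Laplacian of `u` on `Ω`, tested against `C²` functions with compact
support in `Ω`; the reference measure `ν` plays the role of the Lebesgue measure. -/
def IsDistribLaplacianOn (ν : Measure E) (u : E → ℝ) (Ω : Set E) (μ : Measure E) : Prop :=
  ∀ φ : E → ℝ, ContDiff ℝ 2 φ → HasCompactSupport φ → tsupport φ ⊆ Ω →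
    ∫ x in Ω, u x * Δ φ x ∂ν = ∫ x, φ x ∂μ

variable (ν : Measure E) [ν.IsAddHaarMeasure] {Ω : Set E} {χ u : E → ℝ} {δ : ℝ}

lemma integrable_mul_ballAverage_sub (hχ : Continuous χ) (hs : HasCompactSupport χ)
    (hδ : 0 ≤ δ) (hu : IntegrableOn u (cthickening δ (tsupport χ)) ν) :
    Integrable (fun x => χ x * (ballAverage ν δ u x - u x)) ν := by
  have hv := hu.integrable_indicator isClosed_cthickening.measurableSet
  obtain ⟨C, hC⟩ := hs.exists_bound_of_continuous hχ
  simp only [← mul_ballAverage_indicator_cthickening_sub ν hδ (u := u), mul_sub]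
  exact (integrable_mul_ballAverage ν (hχ.integrable_of_hasCompactSupport hs) hv δ).sub
    (hv.bdd_mul hχ.aestronglyMeasurable (.of_forall hC))

lemma integral_mul_ballAverage_sub_eq (hχ : ContDiff ℝ 2 χ) (hs : HasCompactSupport χ)
    (hδ : 0 < δ) (hsub : cthickening δ (tsupport χ) ⊆ Ω)
    (hu : LocallyIntegrableOn u Ω ν) {μ : Measure E} (hμ : IsDistribLaplacianOn ν u Ω μ) :
    ∫ x, χ x * (ballAverage ν δ u x - u x) ∂ν = ∫ x, greenPotential ν δ χ x ∂μ := by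
  set T := cthickening δ (tsupport χ) with hT
  have hTc : IsCompact T := hs.isCompact.cthickening
  have hv : Integrable (T.indicator u) ν :=
    (hu.integrableOn_compact_subset hsub hTc).integrable_indicator hTc.measurableSet
  have hχi : Integrable χ ν := hχ.continuous.integrable_of_hasCompactSupport hs
  obtain ⟨C, hC⟩ := hs.exists_bound_of_continuous hχ.continuous
  have hvχ : Integrable (fun x => T.indicator u x * χ x) ν :=
    hv.mul_bdd hχ.continuous.aestronglyMeasurable (.of_forall hC)
  have hpot : tsupport (greenPotential ν δ χ) ⊆ T := tsupport_greenPotential_subset ν δ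
  have hlap (x : E) (hx : x ∉ T) : Δ (greenPotential ν δ χ) x = 0 :=
    Function.support_subset_iff'.1 ((support_laplacian_subset _).trans hpot) x hx
  symm
  calc ∫ x, greenPotential ν δ χ x ∂μ
      = ∫ x in Ω, u x * Δ (greenPotential ν δ χ) x ∂ν :=
        (hμ _ (contDiff_greenPotential ν δ hχ hs)
          (hTc.of_isClosed_subset (isClosed_tsupport _) hpot) (hpot.trans hsub)).symm
    _ = ∫ x, T.indicator u x * Δ (greenPotential ν δ χ) x ∂ν := by
        rw [setIntegral_eq_integral_of_forall_compl_eq_zero fun x hx => by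
          rw [hlap x fun h => hx (hsub h), mul_zero]]
        refine integral_congr_ae (.of_forall fun x => ?_)
        by_cases hx : x ∈ T
        · simp only [indicator_of_mem hx]
        · simp only [hlap x hx, mul_zero]
    _ = ∫ x, (T.indicator u x * ballAverage ν δ χ x - T.indicator u x * χ x) ∂ν := by
        simp only [laplacian_greenPotential ν hχ hs hδ, mul_sub]
    _ = ∫ x, (χ x * ballAverage ν δ (T.indicator u) x - T.indicator u x * χ x) ∂ν := by
        rw [integral_sub (integrable_mul_ballAverage ν hv hχi δ) hvχ,
          integral_mul_ballAverage_comm ν hv hχi,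
          ← integral_sub (integrable_mul_ballAverage ν hχi hv δ) hvχ]
    _ = ∫ x, χ x * (ballAverage ν δ u x - u x) ∂ν := by
        simp only [mul_comm _ (χ _), ← mul_sub, hT,
          mul_ballAverage_indicator_cthickening_sub ν hδ.le]

end Duality

section Exhaustion

lemma setLIntegral_le_of_forall_isCompact {X : Type*} [TopologicalSpace X] [T2Space X]
    [LocallyCompactSpace X] [SecondCountableTopology X] [MeasurableSpace X] [BorelSpace X]
    {μ : Measure X} {U : Set X} (hU : IsOpen U) {g : X → ENNReal} {c : ENNReal}
    (hc : ∀ K ⊆ U, IsCompact K → ∫⁻ x in K, g x ∂μ ≤ c) : ∫⁻ x in U, g x ∂μ ≤ c := by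
  have : LocallyCompactSpace U := hU.locallyCompactSpace
  have hσ : SigmaCompactSpace U := sigmaCompactSpace_of_locallyCompact_secondCountable
  obtain ⟨K, hK, hKU⟩ := isSigmaCompact_iff_sigmaCompactSpace.2 hσ
  rw [← hKU, ← iUnion_accumulate, setLIntegral_iUnion_of_directed g
    (monotone_accumulate.directed_le)]
  refine iSup_le fun n => hc _ ?_ (isCompact_accumulate hK n)
  exact (accumulate_subset_iUnion n).trans_eq hKU

lemma exists_contDiff_eq_one_tsupport_subset {E : Type*} [NormedAddCommGroup E]
    [NormedSpace ℝ E] [FiniteDimensional ℝ E] {K U : Set E} (hK : IsCompact K) (hU : IsOpen U)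
    (hKU : K ⊆ U) (n : ℕ∞) :
    ∃ χ : E → ℝ, ContDiff ℝ n χ ∧ HasCompactSupport χ ∧ tsupport χ ⊆ U ∧
      (∀ x ∈ K, χ x = 1) ∧ ∀ x, χ x ∈ Icc (0 : ℝ) 1 := by
  obtain ⟨L, hL, hKL, hLU⟩ := exists_compact_between hK hU hKU
  obtain ⟨χ, hone, hzero, hIcc⟩ := exists_contMDiffMap_one_nhds_of_subset_interior
    (modelWithCornersSelf ℝ E) (n := n) hK.isClosed hKL
  have hsupp : tsupport χ ⊆ L :=
    closure_minimal (Function.support_subset_iff'.2 hzero) hL.isClosed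
  exact ⟨χ, χ.contMDiff.contDiff, .intro hL hzero, hsupp.trans hLU,
    fun x hx => hone.self_of_nhdsSet x hx, hIcc⟩

lemma isOpen_setOf_closedBall_subset {X : Type*} [PseudoMetricSpace X] [ProperSpace X] {Ω : Set X}
    (hΩ : IsOpen Ω) {δ : ℝ} (hδ : 0 ≤ δ) : IsOpen {x | closedBall x δ ⊆ Ω} := by
  have hcompl : {x | closedBall x δ ⊆ Ω}ᶜ = cthickening δ Ωᶜ := by
    rw [hΩ.isClosed_compl.cthickening_eq_biUnion_closedBall hδ]
    ext x
    simp [not_subset, dist_comm x, and_comm]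
  rw [← isClosed_compl_iff, hcompl]
  exact isClosed_cthickening

lemma closedBall_subset_of_lt_infDist_compl {X : Type*} [PseudoMetricSpace X] {s : Set X} {x : X}
    {δ : ℝ} (hx : δ < infDist x sᶜ) : closedBall x δ ⊆ s := fun y hy => by
  by_contra hys
  exact (hx.trans_le (infDist_le_dist_of_mem hys)).not_ge (dist_comm x y ▸ hy)

end Exhaustion

section Estimate

variable {E : Type*} [NormedAddCommGroup E] [InnerProductSpace ℝ E] [FiniteDimensional ℝ E]
  [MeasurableSpace E] [BorelSpace E] {ν : Measure E} [ν.IsAddHaarMeasure] {Ω : Set E} {u : E → ℝ}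
  {μ : Measure E} {δ : ℝ}

lemma integral_mul_ballAverage_sub_le {χ : E → ℝ} (hχ : ContDiff ℝ 2 χ)
    (hs : HasCompactSupport χ) (hχ1 : ∀ x, ‖χ x‖ ≤ 1) (hδ : 0 < δ)
    (hsub : cthickening δ (tsupport χ) ⊆ Ω) (hu : LocallyIntegrableOn u Ω ν)
    (hμ : IsDistribLaplacianOn ν u Ω μ) (hfin : μ Ω ≠ ⊤) :
    ∫ x, χ x * (ballAverage ν δ u x - u x) ∂ν ≤ 1 / 2 * δ ^ 2 * μ.real Ω := by
  have hpot : ∀ x ∉ Ω, greenPotential ν δ χ x = 0 := fun x hx =>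
    image_eq_zero_of_notMem_tsupport fun h => hx (hsub (tsupport_greenPotential_subset ν δ h))
  calc ∫ x, χ x * (ballAverage ν δ u x - u x) ∂ν
      = ∫ x in Ω, greenPotential ν δ χ x ∂μ := by
        rw [integral_mul_ballAverage_sub_eq ν hχ hs hδ hsub hu hμ,
          setIntegral_eq_integral_of_forall_compl_eq_zero hpot]
    _ ≤ ‖∫ x in Ω, greenPotential ν δ χ x ∂μ‖ := Real.le_norm_self _
    _ ≤ 1 / 2 * δ ^ 2 * μ.real Ω :=
        norm_setIntegral_le_of_norm_le_const hfin.lt_top fun x _ => by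
          simpa using norm_greenPotential_le ν hδ.le hχ1 x

lemma setLIntegral_ballAverage_sub_le_of_isCompact (hΩ : IsOpen Ω)
    (hu : LocallyIntegrableOn u Ω ν)
    (hmean : ∀ x, closedBall x δ ⊆ Ω → u x ≤ ballAverage ν δ u x)
    (hμ : IsDistribLaplacianOn ν u Ω μ) (hfin : μ Ω ≠ ⊤) (hδ : 0 < δ) {K : Set E}
    (hK : IsCompact K) (hKΩ : K ⊆ {x | closedBall x δ ⊆ Ω}) :
    ∫⁻ x in K, ENNReal.ofReal (ballAverage ν δ u x - u x) ∂ν ≤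
      ENNReal.ofReal (1 / 2 * δ ^ 2) * μ Ω := by
  obtain ⟨χ, hχ, hs, hχΩ, hχK, hχ01⟩ := exists_contDiff_eq_one_tsupport_subset hK
    (isOpen_setOf_closedBall_subset hΩ hδ.le) hKΩ 2
  have hsub : cthickening δ (tsupport χ) ⊆ Ω := by
    rw [hs.isCompact.cthickening_eq_biUnion_closedBall hδ.le]
    exact iUnion₂_subset hχΩ
  have hint : Integrable (fun x => χ x * (ballAverage ν δ u x - u x)) ν :=
    integrable_mul_ballAverage_sub ν hχ.continuous hs hδ.le
      (hu.integrableOn_compact_subset hsub hs.isCompact.cthickening)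
  have hnonneg (x : E) : 0 ≤ χ x * (ballAverage ν δ u x - u x) := by
    by_cases hx : x ∈ tsupport χ
    · exact mul_nonneg (hχ01 x).1 (sub_nonneg.2 (hmean x (hχΩ hx)))
    · rw [image_eq_zero_of_notMem_tsupport hx, zero_mul]
  have hχ1 (x : E) : ‖χ x‖ ≤ 1 := by
    rw [Real.norm_of_nonneg (hχ01 x).1]
    exact (hχ01 x).2
  calc ∫⁻ x in K, ENNReal.ofReal (ballAverage ν δ u x - u x) ∂ν
      = ∫⁻ x in K, ENNReal.ofReal (χ x * (ballAverage ν δ u x - u x)) ∂ν :=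
        setLIntegral_congr_fun hK.measurableSet fun x hx => by simp only [hχK x hx, one_mul]
    _ ≤ ∫⁻ x, ENNReal.ofReal (χ x * (ballAverage ν δ u x - u x)) ∂ν :=
        setLIntegral_le_lintegral _ _
    _ = ENNReal.ofReal (∫ x, χ x * (ballAverage ν δ u x - u x) ∂ν) :=
        (ofReal_integral_eq_lintegral_ofReal hint (.of_forall hnonneg)).symm
    _ ≤ ENNReal.ofReal (1 / 2 * δ ^ 2 * μ.real Ω) := ENNReal.ofReal_le_ofReal
        (integral_mul_ballAverage_sub_le hχ hs hχ1 hδ hsub hu hμ hfin)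
    _ = ENNReal.ofReal (1 / 2 * δ ^ 2) * μ Ω := by
        rw [ENNReal.ofReal_mul (by positivity), Measure.real, ENNReal.ofReal_toReal hfin]

theorem ballAverage_L1_estimate_general (hΩ : IsOpen Ω) (hu : LocallyIntegrableOn u Ω ν)
    (hδ : 0 < δ) (hmean : ∀ x, closedBall x δ ⊆ Ω → u x ≤ ballAverage ν δ u x)
    (hμ : IsDistribLaplacianOn ν u Ω μ) :
    ∫⁻ x in {x | closedBall x δ ⊆ Ω}, ENNReal.ofReal (ballAverage ν δ u x - u x) ∂ν ≤
      ENNReal.ofReal (1 / 2 * δ ^ 2) * μ Ω := by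
  by_cases hfin : μ Ω = ⊤
  · rw [hfin, ENNReal.mul_top (ENNReal.ofReal_pos.2 (by positivity)).ne']
    exact le_top
  · exact setLIntegral_le_of_forall_isCompact (isOpen_setOf_closedBall_subset hΩ hδ.le)
      fun K hKΩ hK =>
        setLIntegral_ballAverage_sub_le_of_isCompact hΩ hu hmean hμ hfin hδ hK hKΩ

end Estimate

/-- Lemma 5.3(2): for a subharmonic `u` whose distributional Laplacian is the positive
measure `μ` with finite total mass, the ball averages `û_δ` satisfy
`∫_{Ω_δ} (û_δ - u) dV ≤ C_m ‖Δu‖_Ω δ²` for small `δ`, with `C_m` depending only on `m`. -/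
theorem ballAverage_L1_estimate (m : ℕ) :
    ∃ C : ℝ, 0 < C ∧
      ∀ (Ω : Set (EuclideanSpace ℝ (Fin m))), IsOpen Ω → Bornology.IsBounded Ω →
      ∀ u : EuclideanSpace ℝ (Fin m) → ℝ,
        LocallyIntegrableOn u Ω volume →
        -- submean property (subharmonicity)
        (∀ x : EuclideanSpace ℝ (Fin m), ∀ ρ : ℝ, 0 < ρ → closedBall x ρ ⊆ Ω →
          u x ≤ ⨍ y in closedBall x ρ, u y ∂volume) →
      ∀ μ : Measure (EuclideanSpace ℝ (Fin m)),
        -- μ is the distributional Laplacian of u on Ω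
        (∀ φ : EuclideanSpace ℝ (Fin m) → ℝ, ContDiff ℝ 2 φ → HasCompactSupport φ →
          tsupport φ ⊆ Ω → ∫ x in Ω, u x * testLaplacian φ x = ∫ x, φ x ∂μ) →
        μ Ω ≠ ⊤ →
        ∃ δ₀ : ℝ, 0 < δ₀ ∧ ∀ δ : ℝ, 0 < δ → δ ≤ δ₀ →
          ∫⁻ x in {x ∈ Ω | δ < infDist x Ωᶜ},
              ENNReal.ofReal ((⨍ y in closedBall x δ, u y ∂volume) - u x) ∂volume ≤
            ENNReal.ofReal (C * δ ^ 2) * μ Ω := by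
  refine ⟨1 / 2, by positivity, fun Ω hΩ _ u hu hmean μ hμ _ => ⟨1, one_pos, fun δ hδ _ => ?_⟩⟩
  have hμ' : IsDistribLaplacianOn volume u Ω μ := fun φ hφ hs hsub => by
    rw [← testLaplacian_eq_laplacian hφ]
    exact hμ φ hφ hs hsub
  exact (lintegral_mono_set fun x hx => closedBall_subset_of_lt_infDist_compl hx.2).trans
    (ballAverage_L1_estimate_general hΩ hu hδ (fun x => hmean x δ hδ) hμ')
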